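/- The set S₃ = {(0,0),(0,1),(1,0),(2,1),(1,2),(2,2)} ⊆ {0,1,2}² has 6 = 2·3 elements and contains no three collinear points; hence D(3) = 6. -/

import Mathlib

def Collinear3 (p q r : ℤ × ℤ) : Prop :=
  (q.1 - p.1) * (r.2 - p.2) - (q.2 - p.2) * (r.1 - p.1) = 0

def InGrid (n : ℕ) (p : ℤ × ℤ) : Prop :=
  0 ≤ p.1 ∧ p.1 < n ∧ 0 ≤ p.2 ∧ p.2 < n

def NoThreeInLine (S : Finset (ℤ × ℤ)) : Prop :=
  ∀ p ∈ S, ∀ q ∈ S, ∀ r ∈ S, p ≠ q → p ≠ r → q ≠ r → ¬ Collinear3 p q r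

/-- The explicit configuration `S₃` on the `3 × 3` grid. -/
def S₃ : Finset (ℤ × ℤ) :=
  {((0 : ℤ), (0 : ℤ)), (0, 1), (1, 0), (2, 1), (1, 2), (2, 2)}

/-- A subset of the `n × n` grid with no three collinear points has at most `2n` points, since it
has at most two points in each column. -/
theorem card_le_two_mul_of_noThreeInLine {n : ℕ} {S : Finset (ℤ × ℤ)}
    (hgrid : ∀ p ∈ S, InGrid n p) (hline : NoThreeInLine S) : S.card ≤ 2 * n := by
  have hmaps : ∀ p ∈ S, p.1 ∈ Finset.Ico (0 : ℤ) n := fun p hp =>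
    Finset.mem_Ico.2 ⟨(hgrid p hp).1, (hgrid p hp).2.1⟩
  have hcolumn : ∀ x ∈ Finset.Ico (0 : ℤ) n, (S.filter fun p => p.1 = x).card ≤ 2 := by
    intro x _
    by_contra! h
    obtain ⟨p, q, r, hp, hq, hr, hpq, hpr, hqr⟩ := Finset.two_lt_card_iff.1 h
    rw [Finset.mem_filter] at hp hq hr
    refine hline p hp.1 q hq.1 r hr.1 hpq hpr hqr ?_
    simp [Collinear3, hp.2, hq.2, hr.2]
  simpa using Finset.card_le_mul_card_image_of_maps_to hmaps 2 hcolumn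

theorem D_three_eq_six :
    S₃.card = 6 ∧ (∀ p ∈ S₃, InGrid 3 p) ∧ NoThreeInLine S₃ ∧
    IsGreatest {k : ℕ | ∃ S : Finset (ℤ × ℤ),
      (∀ p ∈ S, InGrid 3 p) ∧ NoThreeInLine S ∧ S.card = k} 6 := by
  have hcard : S₃.card = 6 := by decide
  have hgrid : ∀ p ∈ S₃, InGrid 3 p := by
    unfold InGrid
    decide
  have hline : NoThreeInLine S₃ := by
    unfold NoThreeInLine Collinear3
    decide
  refine ⟨hcard, hgrid, hline, ⟨S₃, hgrid, hline, hcard⟩, ?_⟩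
  rintro k ⟨S, hS, hSline, rfl⟩
  exact card_le_two_mul_of_noThreeInLine hS hSline
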